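/- Let $T$ and $S$ be commuting invertible ergodic measure preserving transformations of a probability space $(X,\mathcal{X},\mu)$. Then for every $k\geq 1$ the Host–Kra factor $\sigma$-algebras coincide: $\mathcal{Z}_{k}(X,T) = \mathcal{Z}_{k}(X,S)$. -/

import Mathlib

open MeasureTheory Filter Finset

/-- The spaces `X^{[k]} = X^{2^k}`, realized as iterated squares. -/
def HKBox (X : Type*) : ℕ → Type _
  | 0 => X
  | (k+1) => HKBox X k × HKBox X k

def HKBox.instMS (X : Type*) [m : MeasurableSpace X] : ∀ k, MeasurableSpace (HKBox X k)
  | 0 => m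
  | (k+1) => @Prod.instMeasurableSpace _ _ (HKBox.instMS X k) (HKBox.instMS X k)

instance (X : Type*) [MeasurableSpace X] (k : ℕ) : MeasurableSpace (HKBox X k) :=
  HKBox.instMS X k

/-- The diagonal transformation `T^{[k]} = T × ⋯ × T` on `X^{[k]}`. -/
def HKBox.map {X : Type*} (T : X → X) : ∀ k, HKBox X k → HKBox X k
  | 0 => T
  | (k+1) => fun p => (HKBox.map T k p.1, HKBox.map T k p.2)

/-- The σ-algebra of invariant sets of a transformation. -/
def invSigma {α : Type*} [m : MeasurableSpace α] (f : α → α) : MeasurableSpace α where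
  MeasurableSet' s := MeasurableSet s ∧ f ⁻¹' s = s
  measurableSet_empty := ⟨MeasurableSet.empty, rfl⟩
  measurableSet_compl := fun s hs => ⟨hs.1.compl, by rw [Set.preimage_compl, hs.2]⟩
  measurableSet_iUnion := fun s hs => ⟨MeasurableSet.iUnion fun i => (hs i).1, by
    rw [Set.preimage_iUnion]; exact Set.iUnion_congr fun i => (hs i).2⟩

/-- The product of `f` over all `2^k` coordinates of `X^{[k]}`. -/
def HKBox.prodFun {X : Type*} (f : X → ℝ) : ∀ k, HKBox X k → ℝ
  | 0 => f
  | (k+1) => fun p => HKBox.prodFun f k p.1 * HKBox.prodFun f k p.2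

/-- `IsHKSeq μ T ν` asserts that `ν k` is the Host–Kra box measure `μ^{[k]}` of the
system `(X, μ, T)`: `ν 0 = μ` and `ν (k+1)` is the relatively independent square of
`ν k` over the σ-algebra of `T^{[k]}`-invariant sets. -/
def IsHKSeq {X : Type*} [MeasurableSpace X] (μ : Measure X) (T : X → X)
    (ν : ∀ k, Measure (HKBox X k)) : Prop :=
  ν 0 = μ ∧ ∀ k, (∀ F' F'' : HKBox X k → ℝ, Measurable F' → Measurable F'' →
    (∃ C, ∀ x, |F' x| ≤ C) → (∃ C, ∀ x, |F'' x| ≤ C) →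
    ∫ p, F' p.1 * F'' p.2 ∂(ν (k+1)) =
      ∫ x, ((ν k)[F' | invSigma (HKBox.map T k)]) x *
        ((ν k)[F'' | invSigma (HKBox.map T k)]) x ∂(ν k))

/-- The `k`-th Host–Kra seminorm of `f`, computed from a sequence `ν` of box measures:
`⦀f⦀_k = (∫ ∏_{ε} f(x_ε) dν k)^{1/2^k}`. -/
noncomputable def HKseminorm {X : Type*} [MeasurableSpace X]
    (ν : ∀ k, Measure (HKBox X k)) (k : ℕ) (f : X → ℝ) : ℝ :=
  (∫ x, HKBox.prodFun f k x ∂(ν k)) ^ (((2 : ℝ) ^ k)⁻¹)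

set_option linter.unusedSectionVars false

/-! ### Bounded measurable functions -/

/-- Bounded measurable real functions. -/
structure BM {α : Type*} [MeasurableSpace α] (F : α → ℝ) : Prop where
  meas : Measurable F
  bdd : ∃ C, ∀ x, |F x| ≤ C

namespace BM
variable {α β : Type*} [MeasurableSpace α] [MeasurableSpace β]

theorem mul {F G : α → ℝ} (hF : BM F) (hG : BM G) : BM (fun x => F x * G x) := by
  obtain ⟨C, hC⟩ := hF.bdd
  obtain ⟨D, hD⟩ := hG.bdd
  refine ⟨hF.meas.mul hG.meas, C * D, fun x => ?_⟩
  rw [abs_mul]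
  exact mul_le_mul (hC x) (hD x) (abs_nonneg _) ((abs_nonneg _).trans (hC x))

theorem add {F G : α → ℝ} (hF : BM F) (hG : BM G) : BM (fun x => F x + G x) := by
  obtain ⟨C, hC⟩ := hF.bdd
  obtain ⟨D, hD⟩ := hG.bdd
  exact ⟨hF.meas.add hG.meas, C + D, fun x => (abs_add_le _ _).trans (add_le_add (hC x) (hD x))⟩

theorem const (c : ℝ) : BM (fun _ : α => c) := ⟨measurable_const, |c|, fun _ => le_rfl⟩

theorem sub {F G : α → ℝ} (hF : BM F) (hG : BM G) : BM (fun x => F x - G x) := by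
  simpa [sub_eq_add_neg] using hF.add ((const (-1)).mul hG)

theorem comp {F : α → ℝ} (hF : BM F) {g : β → α} (hg : Measurable g) : BM (fun x => F (g x)) := by
  obtain ⟨C, hC⟩ := hF.bdd
  exact ⟨hF.meas.comp hg, C, fun x => hC _⟩

theorem ind {s : Set α} (hs : MeasurableSet s) : BM (s.indicator (fun _ => (1:ℝ))) := by
  refine ⟨measurable_const.indicator hs, 1, fun x => ?_⟩
  by_cases h : x ∈ s <;> simp [h]

theorem integrable {F : α → ℝ} (hF : BM F) (ν : Measure α) [IsFiniteMeasure ν] :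
    Integrable F ν := by
  obtain ⟨C, hC⟩ := hF.bdd
  exact Integrable.of_bound hF.meas.aestronglyMeasurable C (Eventually.of_forall hC)

theorem memLp {F : α → ℝ} (hF : BM F) (ν : Measure α) [IsFiniteMeasure ν] (p : ENNReal) :
    MemLp F p ν := by
  obtain ⟨C, hC⟩ := hF.bdd
  exact MemLp.of_bound hF.meas.aestronglyMeasurable C (Eventually.of_forall hC)

end BM

theorem invSigma_le {α : Type*} [m : MeasurableSpace α] (f : α → α) : invSigma f ≤ m :=
  fun _ hs => hs.1

theorem BM.meas' {α : Type*} {m : MeasurableSpace α} {F : α → ℝ} (h : @BM α m F) :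
    Measurable[m] F := h.meas

theorem BM.bdd' {α : Type*} {m : MeasurableSpace α} {F : α → ℝ} (h : @BM α m F) :
    ∃ C, ∀ x, |F x| ≤ C := h.bdd

section tools
variable {α : Type*} {m1 m2 : MeasurableSpace α} [m0 : MeasurableSpace α] {ν : Measure α} [IsProbabilityMeasure ν]

theorem BM.mono (h1 : m1 ≤ m0) {F : α → ℝ} (hF : @BM α m1 F) : BM F :=
  ⟨hF.meas'.mono h1 le_rfl, hF.bdd'⟩

/-- A bounded `m1`-measurable version of the conditional expectation. -/
theorem exists_rep {F : α → ℝ} (hF : BM F) :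
    ∃ c : α → ℝ, @BM α m1 c ∧ c =ᵐ[ν] ν[F | m1] := by
  obtain ⟨C, hC⟩ := hF.bdd
  have hb : ∀ᵐ x ∂ν, |(ν[F | m1]) x| ≤ |C| := by
    exact ae_bdd_abs_condExp_of_ae_bdd_abs (m := m1) (μ := ν) (R := |C|) (f := F)
      (Eventually.of_forall fun x => (hC x).trans (le_abs_self C))
  refine ⟨fun x => max (min ((ν[F | m1]) x) |C|) (-|C|),
    @BM.mk α m1 _ ?_ ⟨|C|, fun x => ?_⟩, ?_⟩
  · have : Measurable[m1] (ν[F | m1]) := stronglyMeasurable_condExp.measurable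
    exact Measurable.max (this.min measurable_const) measurable_const
  · rw [abs_le]
    have := abs_nonneg C
    exact ⟨le_max_right _ _, max_le (min_le_right _ _) (by linarith)⟩
  · filter_upwards [hb] with x hx
    rw [abs_le] at hx
    rw [min_eq_left hx.2, max_eq_left hx.1]

theorem integral_mul_condExp_left (h1 : m1 ≤ m0) {F w : α → ℝ}
    (hF : BM F) (hw : @BM α m1 w) :
    ∫ x, w x * (ν[F | m1]) x ∂ν = ∫ x, w x * F x ∂ν := by
  have h := condExp_mul_of_stronglyMeasurable_left (μ := ν) (m := m1) (f := w) (g := F)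
    hw.meas'.stronglyMeasurable (((hw.mono h1).mul hF).integrable ν) (hF.integrable ν)
  have h2 := integral_condExp (μ := ν) h1 (f := w * F)
  rw [← integral_congr_ae (f := fun x => (ν[w * F | m1]) x) (h.trans (by rfl))]
  exact h2

/-- Characterization of a bounded version of the conditional expectation by set integrals. -/
theorem rep_of_setIntegral (h1 : m1 ≤ m0) {F c : α → ℝ}
    (hF : BM F) (hc : @BM α m1 c)
    (h : ∀ s, MeasurableSet[m1] s → ∫ x in s, c x ∂ν = ∫ x in s, F x ∂ν) :
    c =ᵐ[ν] ν[F | m1] := by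
  refine ae_eq_condExp_of_forall_setIntegral_eq h1 (hF.integrable ν)
    (fun s _ _ => ((hc.mono h1).integrable ν).integrableOn) (fun s hs _ => h s hs) ?_
  exact hc.meas'.stronglyMeasurable.aestronglyMeasurable

theorem ae_eq_of_sq {F G : α → ℝ} (hF : BM F) (hG : BM G) (a : ℝ)
    (h1 : ∫ x, F x * F x ∂ν = a) (h2 : ∫ x, G x * G x ∂ν = a) (h3 : ∫ x, F x * G x ∂ν = a) :
    F =ᵐ[ν] G := by
  have h : ∫ x, (F x - G x) * (F x - G x) ∂ν = 0 := by
    have e : ∀ x, (F x - G x) * (F x - G x) = (F x * F x + G x * G x) - 2 * (F x * G x) := by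
      intro x; ring
    simp_rw [e]
    rw [integral_sub (((hF.mul hF).add (hG.mul hG)).integrable ν)
      (((BM.const 2).mul (hF.mul hG)).integrable ν),
      integral_add ((hF.mul hF).integrable ν) ((hG.mul hG).integrable ν), integral_const_mul,
      h1, h2, h3]
    ring
  rw [integral_eq_zero_iff_of_nonneg (fun x => mul_self_nonneg _)
    (((hF.sub hG).mul (hF.sub hG)).integrable ν)] at h
  filter_upwards [h] with x hx
  have : (F x - G x) * (F x - G x) = 0 := hx
  exact sub_eq_zero.1 (mul_self_eq_zero.1 this)

/-- Two conditional expectations which determine each other coincide. -/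
theorem condExp_eq_of_mutual (h1 : m1 ≤ m0) (h2 : m2 ≤ m0)
    {F u v : α → ℝ}
    (hu : @BM α m1 u) (hv : @BM α m2 v)
    (hu' : u =ᵐ[ν] ν[F | m1]) (hv' : v =ᵐ[ν] ν[F | m2])
    (e1 : u =ᵐ[ν] ν[v | m1]) (e2 : v =ᵐ[ν] ν[u | m2]) :
    ν[F | m1] =ᵐ[ν] ν[F | m2] := by
  have a1 : ∫ x, u x * u x ∂ν = ∫ x, u x * v x ∂ν := by
    rw [← integral_mul_condExp_left h1 (hv.mono h2) hu]
    refine integral_congr_ae ?_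
    filter_upwards [e1] with x hx
    rw [← hx]
  have a2 : ∫ x, v x * v x ∂ν = ∫ x, u x * v x ∂ν := by
    have : ∫ x, u x * v x ∂ν = ∫ x, v x * u x ∂ν := by simp_rw [mul_comm]
    rw [this, ← integral_mul_condExp_left h2 (hu.mono h1) hv]
    refine integral_congr_ae ?_
    filter_upwards [e2] with x hx
    rw [← hx]
  exact (hu'.symm.trans (ae_eq_of_sq (hu.mono h1) (hv.mono h2) _ a1 a2 rfl)).trans hv'

/-- An a.e. invariant function agrees a.e. with a strictly invariant one. -/
theorem exists_inv_version {Φ : α → α} (hΦ : MeasurePreserving Φ ν ν) {h : α → ℝ}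
    (hm : Measurable h) (hinv : (fun x => h (Φ x)) =ᵐ[ν] h) :
    ∃ h' : α → ℝ, Measurable[invSigma Φ] h' ∧ h' =ᵐ[ν] h := by
  let h' : α → ℝ := fun x => limsup (fun n : ℕ => h (Φ^[n] x)) atTop
  have hmeas : Measurable h' := Measurable.limsup fun n => hm.comp (hΦ.measurable.iterate n)
  have hstrict : ∀ x, h' (Φ x) = h' x := by
    intro x
    have := Filter.limsup_nat_add (fun n : ℕ => h (Φ^[n] x)) 1
    simpa [h', Function.iterate_succ_apply] using this
  refine ⟨h', fun s hs => ⟨hmeas hs, ?_⟩, ?_⟩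
  · ext x
    simp [hstrict]
  · have : ∀ n : ℕ, ∀ᵐ x ∂ν, h (Φ^[n] x) = h x := by
      intro n
      induction n with
      | zero => simp
      | succ n ih =>
        have := hΦ.quasiMeasurePreserving.ae ih
        filter_upwards [this, hinv] with x h1 h2
        rw [Function.iterate_succ_apply, h1, h2]
    filter_upwards [ae_all_iff.2 this] with x hx
    simp [h', hx]

end tools

section ergodic
variable {α : Type*} [m0 : MeasurableSpace α] {ν : Measure α} [IsProbabilityMeasure ν]

/-- Cesàro averages along the orbit. -/
noncomputable def avg (Φ : α → α) (G : α → ℝ) (N : ℕ) (x : α) : ℝ :=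
  (N : ℝ)⁻¹ * ∑ n ∈ Finset.range N, G (Φ^[n] x)

theorem BM.sum {ι : Type*} (s : Finset ι) {F : ι → α → ℝ} (hF : ∀ i, BM (F i)) :
    BM (fun x => ∑ i ∈ s, F i x) := by
  classical
  induction s using Finset.induction_on with
  | empty => simpa using BM.const (α := α) 0
  | insert a s ha ih => simpa [Finset.sum_insert ha] using (hF a).add ih

theorem BM.avg {Φ : α → α} (hΦ : Measurable Φ) {G : α → ℝ} (hG : BM G) (N : ℕ) :
    BM (avg Φ G N) :=
  (BM.const _).mul (BM.sum _ fun n => hG.comp (hΦ.iterate n))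

/-- Mean ergodic theorem, in `L¹`. -/
theorem mean_ergodic {Φ : α → α} (hΦ : MeasurePreserving Φ ν ν) {G : α → ℝ} (hG : BM G) :
    Tendsto (fun N => ∫ x, |avg Φ G N x - (ν[G | invSigma Φ]) x| ∂ν) atTop (nhds 0) := by
  let K : Lp ℝ 2 ν →L[ℝ] Lp ℝ 2 ν :=
    (Lp.compMeasurePreservingₗᵢ ℝ Φ hΦ).toContinuousLinearMap
  have hK : ‖K‖ ≤ 1 := LinearIsometry.norm_toContinuousLinearMap_le _
  let g : Lp ℝ 2 ν := (hG.memLp ν 2).toLp G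
  have hmet := K.tendsto_birkhoffAverage_orthogonalProjection hK g
  set V := K.eqLocus (1 : Lp ℝ 2 ν →L[ℝ] Lp ℝ 2 ν) with hV
  set h : Lp ℝ 2 ν := (V.orthogonalProjectionOnto g : Lp ℝ 2 ν) with hh
  have hfix : K h = h := (V.orthogonalProjectionOnto g).2
  have hfix' : (fun x => h (Φ x)) =ᵐ[ν] h := by
    have h1 := Lp.coeFn_compMeasurePreserving h hΦ
    have h2 : Lp.compMeasurePreserving Φ hΦ h = h := hfix
    rw [h2] at h1
    exact h1.symm
  -- identification of the limit
  have hlim : h =ᵐ[ν] ν[G | invSigma Φ] := by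
    obtain ⟨h', hm', he'⟩ := exists_inv_version hΦ (Lp.stronglyMeasurable h).measurable hfix'
    have hhI : Integrable h ν := (Lp.memLp h).integrable (by norm_num)
    refine ae_eq_condExp_of_forall_setIntegral_eq (invSigma_le Φ) (hG.integrable ν)
      (fun s _ _ => hhI.integrableOn) ?_ ⟨h', hm'.stronglyMeasurable, he'.symm⟩
    intro s hs _
    have hs0 : MeasurableSet s := hs.1
    let e : Lp ℝ 2 ν := indicatorConstLp 2 hs0 (measure_ne_top ν s) (1 : ℝ)
    have he : e ∈ V := by
      change Lp.compMeasurePreserving Φ hΦ e = e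
      apply Lp.ext
      have h1 := Lp.coeFn_compMeasurePreserving e hΦ
      have h2 : e =ᵐ[ν] s.indicator fun _ => (1:ℝ) := indicatorConstLp_coeFn
      have h3 := hΦ.quasiMeasurePreserving.ae_eq_comp h2
      refine h1.trans (h3.trans ?_)
      refine EventuallyEq.trans (Eventually.of_forall fun x => ?_) h2.symm
      have : Φ x ∈ s ↔ x ∈ s := by
        have := hs.2
        rw [← Set.mem_preimage, this]
      by_cases hx : x ∈ s
      · simp [this.2 hx, hx]
      · simp [mt this.1 hx, hx]
    have hin : inner ℝ e h = inner ℝ e g := by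
      rw [hh]
      have := V.starProjection_inner_eq_zero g e he
      rw [inner_sub_left, sub_eq_zero] at this
      rw [real_inner_comm, real_inner_comm g]
      exact this.symm
    rw [L2.inner_indicatorConstLp_one, L2.inner_indicatorConstLp_one] at hin
    rw [hin]
    exact setIntegral_congr_ae hs0 ((hG.memLp ν 2).coeFn_toLp.mono fun x hx _ => hx)
  -- the averages
  have havg : ∀ N, birkhoffAverage ℝ K _root_.id N g = ((BM.avg hΦ.measurable hG N).memLp ν 2).toLp _ := by
    intro N
    have hit : ∀ n, K^[n] g = ((hG.comp (hΦ.measurable.iterate n)).memLp ν 2).toLp _ := by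
      intro n
      have := congrFun (Lp.compMeasurePreserving_iterate (E := ℝ) (p := 2) hΦ n) g
      exact this
    have hsum : ∀ N : ℕ, ∑ n ∈ Finset.range N, K^[n] g =
        ((BM.sum (Finset.range N) fun n => hG.comp (hΦ.measurable.iterate n)).memLp ν 2).toLp _ := by
      intro N
      induction N with
      | zero =>
        simp only [Finset.range_zero, Finset.sum_empty]
        rfl
      | succ N ih =>
        rw [Finset.sum_range_succ, ih, hit, ← MemLp.toLp_add]
        congr 1
        funext x
        simp [Finset.sum_range_succ]
    simp only [birkhoffAverage, birkhoffSum, _root_.id]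
    rw [hsum, ← MemLp.toLp_const_smul]
    rfl
  have hn : Tendsto (fun N => ‖birkhoffAverage ℝ K _root_.id N g - h‖) atTop (nhds 0) :=
    tendsto_iff_norm_sub_tendsto_zero.1 hmet
  refine squeeze_zero (fun N => integral_nonneg fun x => abs_nonneg _) (fun N => ?_) hn
  have e1 : (fun x => avg Φ G N x - (ν[G | invSigma Φ]) x) =ᵐ[ν]
      (birkhoffAverage ℝ K _root_.id N g - h : Lp ℝ 2 ν) := by
    rw [havg]
    filter_upwards [Lp.coeFn_sub (((BM.avg hΦ.measurable hG N).memLp ν 2).toLp _) h, hlim,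
      ((BM.avg hΦ.measurable hG N).memLp ν 2).coeFn_toLp] with x h1 h2 h3
    rw [h1, Pi.sub_apply, h2, h3]
  set d : Lp ℝ 2 ν := birkhoffAverage ℝ K _root_.id N g - h
  have e2 : ∫ x, |avg Φ G N x - (ν[G | invSigma Φ]) x| ∂ν = ∫ x, ‖d x‖ ∂ν :=
    integral_congr_ae (by filter_upwards [e1] with x hx; rw [hx]; rfl)
  rw [e2, Lp.norm_def, integral_norm_eq_lintegral_enorm (Lp.aestronglyMeasurable d),
    ← eLpNorm_one_eq_lintegral_enorm]
  exact ENNReal.toReal_mono (Lp.eLpNorm_ne_top d)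
    (eLpNorm_le_eLpNorm_of_exponent_le (by norm_num) (Lp.aestronglyMeasurable d))

/-- Weak form of the mean ergodic theorem. -/
theorem weak_ergodic {Φ : α → α} (hΦ : MeasurePreserving Φ ν ν) {F G : α → ℝ} (hF : BM F)
    (hG : BM G) {c : α → ℝ} (hc : BM c) (hc' : c =ᵐ[ν] ν[G | invSigma Φ]) :
    Tendsto (fun N : ℕ => (N : ℝ)⁻¹ * ∑ n ∈ Finset.range N, ∫ x, F x * G (Φ^[n] x) ∂ν) atTop
      (nhds (∫ x, F x * c x ∂ν)) := by
  obtain ⟨C, hC⟩ := hF.bdd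
  have e : ∀ N : ℕ, (N : ℝ)⁻¹ * ∑ n ∈ Finset.range N, ∫ x, F x * G (Φ^[n] x) ∂ν =
      ∫ x, F x * avg Φ G N x ∂ν := by
    intro N
    rw [← integral_finsetSum _ fun n _ =>
      ((hF.mul (hG.comp (hΦ.measurable.iterate n))).integrable ν), ← integral_const_mul]
    refine integral_congr_ae (Eventually.of_forall fun x => ?_)
    simp only [avg]
    rw [← Finset.mul_sum]
    ring
  simp_rw [e]
  rw [tendsto_iff_norm_sub_tendsto_zero]
  have h0 := (mean_ergodic hΦ hG).const_mul C
  rw [mul_zero] at h0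
  refine squeeze_zero (fun N => norm_nonneg _) (fun N => ?_) h0
  have hA := BM.avg hΦ.measurable hG N
  rw [← integral_sub ((hF.mul hA).integrable ν) ((hF.mul hc).integrable ν), ← integral_const_mul]
  refine (norm_integral_le_integral_norm _).trans (integral_mono_ae ?_ ?_ ?_)
  · exact (((hF.mul hA).sub (hF.mul hc)).integrable ν).norm
  · exact (((hA.integrable ν).sub integrable_condExp).abs).const_mul C
  · filter_upwards [hc'] with x hx
    rw [← hx, ← mul_sub, Real.norm_eq_abs, abs_mul]
    exact mul_le_mul_of_nonneg_right (hC x) (abs_nonneg _)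

/-- If `J` is invariant under an extension `Ψ` of `R`, integrating `φ ∘ π` against `J` only
depends on the conditional expectation of `φ` on the invariant sets of `R`. -/
theorem integral_factor {β : Type*} [MeasurableSpace β] {ρ : Measure β} [IsProbabilityMeasure ρ]
    {R : α → α} (hR : MeasurePreserving R ν ν) {Ψ : β → β} (hΨ : MeasurePreserving Ψ ρ ρ)
    {π : β → α} (hπ : MeasurePreserving π ρ ν) (hsemi : ∀ p, π (Ψ p) = R (π p))
    {J : β → ℝ} (hJ : BM J) (hJinv : ∀ p, J (Ψ p) = J p) {φ c : α → ℝ} (hφ : BM φ) (hc : BM c)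
    (hc' : c =ᵐ[ν] ν[φ | invSigma R]) :
    ∫ p, φ (π p) * J p ∂ρ = ∫ p, c (π p) * J p ∂ρ := by
  obtain ⟨C, hC⟩ := hJ.bdd
  have hsemi' : ∀ n p, π (Ψ^[n] p) = R^[n] (π p) := by
    intro n
    induction n with
    | zero => simp
    | succ n ih => intro p; rw [Function.iterate_succ_apply, ih, hsemi, Function.iterate_succ_apply]
  have hJinv' : ∀ n p, J (Ψ^[n] p) = J p := by
    intro n
    induction n with
    | zero => simp
    | succ n ih => intro p; rw [Function.iterate_succ_apply, ih, hJinv]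
  have e : ∀ n : ℕ, ∫ p, φ (R^[n] (π p)) * J p ∂ρ = ∫ p, φ (π p) * J p ∂ρ := by
    intro n
    have hb := ((hφ.comp hπ.measurable).mul hJ)
    have hmp := hΨ.iterate n
    have := integral_map (μ := ρ) hmp.aemeasurable (f := fun p => φ (π p) * J p)
      hb.meas.aestronglyMeasurable
    rw [hmp.map_eq] at this
    rw [this]
    simp_rw [hsemi', hJinv']
  have e2 : ∀ N : ℕ, 0 < N → ∫ p, avg R φ N (π p) * J p ∂ρ = ∫ p, φ (π p) * J p ∂ρ := by
    intro N hN
    have : ∀ p, avg R φ N (π p) * J p =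
        (N:ℝ)⁻¹ * ∑ n ∈ Finset.range N, φ (R^[n] (π p)) * J p := by
      intro p; simp only [avg]; rw [mul_assoc, Finset.sum_mul]
    simp_rw [this]
    rw [integral_const_mul, integral_finsetSum _ fun n _ =>
      (((hφ.comp (hR.measurable.iterate n)).comp hπ.measurable).mul hJ).integrable ρ]
    simp_rw [e]
    rw [Finset.sum_const, Finset.card_range, nsmul_eq_mul]
    have : (N:ℝ) ≠ 0 := by positivity
    field_simp
  have hlim : Tendsto (fun N => ∫ p, avg R φ N (π p) * J p ∂ρ) atTop
      (nhds (∫ p, c (π p) * J p ∂ρ)) := by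
    rw [tendsto_iff_norm_sub_tendsto_zero]
    have h0 := (mean_ergodic hR hφ).const_mul C
    rw [mul_zero] at h0
    refine squeeze_zero (fun N => norm_nonneg _) (fun N => ?_) h0
    have hA := BM.avg hR.measurable hφ N
    have hd : BM (fun x => |avg R φ N x - c x|) := by
      obtain ⟨D, hD⟩ := (hA.sub hc).bdd
      exact ⟨(hA.sub hc).meas.abs, D, fun x => by rw [abs_abs]; exact hD x⟩
    have e3 : ∫ x, |avg R φ N x - (ν[φ | invSigma R]) x| ∂ν =
        ∫ p, |avg R φ N (π p) - c (π p)| ∂ρ := by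
      have := integral_map (μ := ρ) hπ.aemeasurable (f := fun x => |avg R φ N x - c x|)
        hd.meas.aestronglyMeasurable
      rw [hπ.map_eq] at this
      rw [← this]
      refine integral_congr_ae ?_
      filter_upwards [hc'] with x hx
      rw [hx]
    rw [e3, ← integral_sub (((hA.comp hπ.measurable).mul hJ).integrable ρ)
      (((hc.comp hπ.measurable).mul hJ).integrable ρ), ← integral_const_mul]
    refine (norm_integral_le_integral_norm _).trans (integral_mono ?_ ?_ ?_)
    · exact ((((hA.comp hπ.measurable).mul hJ).sub
        ((hc.comp hπ.measurable).mul hJ)).integrable ρ).norm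
    · exact ((hd.comp hπ.measurable).integrable ρ).const_mul C
    · intro p
      simp only
      rw [← sub_mul, Real.norm_eq_abs, abs_mul, mul_comm]
      exact mul_le_mul_of_nonneg_right (hC p) (abs_nonneg _)
  refine tendsto_nhds_unique ?_ hlim
  refine tendsto_const_nhds.congr' ?_
  filter_upwards [eventually_gt_atTop 0] with N hN
  exact (e2 N hN).symm

end ergodic

/-! ### Relatively independent squares -/

section square
variable {Y : Type*} [mY : MeasurableSpace Y] {ν : Measure Y} [IsProbabilityMeasure ν]

theorem BM.integral_comp {α β : Type*} [MeasurableSpace α] [MeasurableSpace β] {ρ : Measure α}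
    {σ : Measure β} {g : α → β} (hg : MeasurePreserving g ρ σ) {F : β → ℝ} (hF : BM F) :
    ∫ x, F (g x) ∂ρ = ∫ y, F y ∂σ := by
  have := integral_map (μ := ρ) hg.aemeasurable (f := F) hF.meas.aestronglyMeasurable
  rw [hg.map_eq] at this
  exact this.symm

/-- If a bounded density `H` satisfies `∫_{Φ⁻¹ E} H = ∫_E H` for rectangles, then
`∫ G ∘ Φ * H = ∫ G * H` for all bounded measurable `G`. -/
theorem dynkin_density {ρ : Measure (Y × Y)} [IsProbabilityMeasure ρ] {Φ : Y × Y → Y × Y}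
    (hΦ : MeasurePreserving Φ ρ ρ) {H : Y × Y → ℝ} (hH : BM H)
    (hrect : ∀ A B : Set Y, MeasurableSet A → MeasurableSet B →
      ∫ p in Φ ⁻¹' (A ×ˢ B), H p ∂ρ = ∫ p in A ×ˢ B, H p ∂ρ)
    {G : Y × Y → ℝ} (hG : BM G) :
    ∫ p, G (Φ p) * H p ∂ρ = ∫ p, G p * H p ∂ρ := by
  have hset : ∀ E : Set (Y × Y), MeasurableSet E →
      ∫ p in Φ ⁻¹' E, H p ∂ρ = ∫ p in E, H p ∂ρ := by
    intro E hE
    induction E, hE using MeasurableSpace.induction_on_inter generateFrom_prod.symm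
      isPiSystem_prod with
    | empty => simp
    | basic E hE =>
      obtain ⟨A, hA, B, hB, rfl⟩ := hE
      exact hrect A B hA hB
    | compl E hE ih =>
      have hu : ∫ p, H p ∂ρ = ∫ p, H p ∂ρ := rfl
      have h1 := integral_add_compl hE (hH.integrable ρ)
      have h2 := integral_add_compl (hΦ.measurable hE) (hH.integrable ρ)
      rw [Set.preimage_compl]
      linarith
    | iUnion E hd hE ih =>
      rw [Set.preimage_iUnion, integral_iUnion (fun i => hΦ.measurable (hE i))
        (fun i j hij => (hd hij).preimage Φ) (hH.integrable ρ).integrableOn,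
        integral_iUnion hE hd (hH.integrable ρ).integrableOn]
      simp_rw [ih]
  have hcm : MeasurableSpace.comap Φ inferInstance ≤ (inferInstance : MeasurableSpace (Y × Y)) :=
    hΦ.measurable.comap_le
  have hcomp : ∀ {F : Y × Y → ℝ}, BM F →
      @BM _ (MeasurableSpace.comap Φ inferInstance) (fun p => F (Φ p)) := by
    intro F hF
    exact @BM.mk _ (MeasurableSpace.comap Φ inferInstance) _
      (hF.meas.comp (comap_measurable Φ)) ((hF.comp hΦ.measurable).bdd)
  have hce : (fun p => H (Φ p)) =ᵐ[ρ] ρ[H | MeasurableSpace.comap Φ inferInstance] := by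
    refine rep_of_setIntegral hcm hH (hcomp hH) ?_
    rintro _ ⟨E, hE, rfl⟩
    rw [hset E hE]
    have h1 : ∫ p in Φ ⁻¹' E, H (Φ p) ∂ρ = ∫ p, (E.indicator H) (Φ p) ∂ρ := by
      rw [← integral_indicator (hΦ.measurable hE)]
      rfl
    have hb : BM (E.indicator H) := by
      obtain ⟨C, hC⟩ := hH.bdd
      refine ⟨hH.meas.indicator hE, C, fun x => ?_⟩
      by_cases hx : x ∈ E
      · simpa [hx] using hC x
      · simpa [hx] using (abs_nonneg _).trans (hC x)
    rw [h1, BM.integral_comp hΦ hb, integral_indicator hE]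
  rw [← integral_mul_condExp_left hcm hH (hcomp hG), ← BM.integral_comp hΦ (hG.mul hH)]
  refine integral_congr_ae ?_
  filter_upwards [hce] with p hp
  rw [hp]

/-- `ρ` is the relatively independent square of `ν` over the `R`-invariant sets. -/
def RelSq (ν : Measure Y) (R : Y → Y) (ρ : Measure (Y × Y)) : Prop :=
  ∀ F' F'' : Y → ℝ, Measurable F' → Measurable F'' →
    (∃ C, ∀ x, |F' x| ≤ C) → (∃ C, ∀ x, |F'' x| ≤ C) →
    ∫ p, F' p.1 * F'' p.2 ∂ρ = ∫ x, (ν[F' | invSigma R]) x * (ν[F'' | invSigma R]) x ∂ν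

theorem RelSq.prob {R : Y → Y} {ρ : Measure (Y × Y)} (h : RelSq ν R ρ) :
    IsProbabilityMeasure ρ := by
  have h1 := h (fun _ => 1) (fun _ => 1) measurable_const measurable_const
    ⟨1, by simp⟩ ⟨1, by simp⟩
  rw [condExp_const (invSigma_le R)] at h1
  simp only [mul_one, integral_const, smul_eq_mul, probReal_univ] at h1
  constructor
  rw [measureReal_def] at h1
  rw [← ENNReal.toReal_eq_one_iff]
  exact h1

/-- `g` preserves `ν` and acts trivially on the `R`-invariant sets. -/
structure Triv (ν : Measure Y) (R g : Y → Y) : Prop where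
  mp : MeasurePreserving g ν ν
  triv : ∀ B, MeasurableSet B → R ⁻¹' B = B → g ⁻¹' B =ᵐ[ν] B

theorem Triv.id (R : Y → Y) : Triv ν R id := ⟨MeasurePreserving.id ν, fun _ _ _ => EventuallyEq.rfl⟩

theorem Triv.self {R : Y → Y} (h : MeasurePreserving R ν ν) : Triv ν R R :=
  ⟨h, fun _ _ e => EventuallyEq.of_eq e⟩

theorem Triv.condExp {R g : Y → Y} (h : Triv ν R g) {F : Y → ℝ} (hF : BM F) :
    ν[fun x => F (g x) | invSigma R] =ᵐ[ν] ν[F | invSigma R] := by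
  obtain ⟨c, hc, hc'⟩ := exists_rep (ν := ν) (m1 := invSigma R) hF
  refine EventuallyEq.trans ?_ hc'
  refine (rep_of_setIntegral (invSigma_le R) (hF.comp h.mp.measurable) hc ?_).symm
  intro s hs
  rw [setIntegral_congr_ae (hs.1) (hc'.mono fun x hx _ => hx),
    setIntegral_condExp (invSigma_le R) (hF.integrable ν) hs,
    ← setIntegral_congr_set (f := fun x => F (g x)) (h.triv s hs.1 hs.2)]
  have h1 : ∫ p in g ⁻¹' s, F (g p) ∂ν = ∫ p, (s.indicator F) (g p) ∂ν := by
    rw [← integral_indicator (h.mp.measurable hs.1)]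
    rfl
  have hb : BM (s.indicator F) := by
    obtain ⟨C, hC⟩ := hF.bdd
    refine ⟨hF.meas.indicator hs.1, C, fun x => ?_⟩
    by_cases hx : x ∈ s
    · simpa [hx] using hC x
    · simpa [hx] using (abs_nonneg _).trans (hC x)
  rw [h1, BM.integral_comp h.mp hb, integral_indicator hs.1]

theorem RelSq.apply {R : Y → Y} {ρ : Measure (Y × Y)} (h : RelSq ν R ρ) {F G : Y → ℝ}
    (hF : BM F) (hG : BM G) :
    ∫ p, F p.1 * G p.2 ∂ρ = ∫ x, (ν[F | invSigma R]) x * (ν[G | invSigma R]) x ∂ν :=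
  h F G hF.meas hG.meas hF.bdd hG.bdd

theorem measure_prod_ext {ρ σ : Measure (Y × Y)} [IsProbabilityMeasure ρ] [IsProbabilityMeasure σ]
    (h : ∀ F G : Y → ℝ, BM F → BM G → ∫ p, F p.1 * G p.2 ∂ρ = ∫ p, F p.1 * G p.2 ∂σ) :
    ρ = σ := by
  refine Measure.ext_prod fun {A B} hA hB => ?_
  have e := h _ _ (BM.ind hA) (BM.ind hB)
  have e' : ∀ p : Y × Y, A.indicator (fun _ => (1:ℝ)) p.1 * B.indicator (fun _ => (1:ℝ)) p.2 =
      (A ×ˢ B).indicator (fun _ => (1:ℝ)) p := by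
    intro p
    by_cases h1 : p.1 ∈ A <;> by_cases h2 : p.2 ∈ B <;> simp [h1, h2, Set.indicator]
  simp_rw [e'] at e
  rw [integral_indicator_const _ (hA.prod hB), integral_indicator_const _ (hA.prod hB)] at e
  simp only [smul_eq_mul, mul_one, measureReal_def] at e
  exact (ENNReal.toReal_eq_toReal_iff' (measure_ne_top _ _) (measure_ne_top _ _)).1 e

theorem RelSq.mp_map {R : Y → Y} {ρ : Measure (Y × Y)} (h : RelSq ν R ρ) {a b : Y → Y}
    (ha : Triv ν R a) (hb : Triv ν R b) :
    MeasurePreserving (fun p : Y × Y => (a p.1, b p.2)) ρ ρ := by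
  have := h.prob
  have hm : Measurable (fun p : Y × Y => (a p.1, b p.2)) :=
    (ha.mp.measurable.comp measurable_fst).prodMk (hb.mp.measurable.comp measurable_snd)
  refine ⟨hm, ?_⟩
  have := Measure.isProbabilityMeasure_map (μ := ρ) hm.aemeasurable
  refine measure_prod_ext fun F G hF hG => ?_
  rw [integral_map hm.aemeasurable
    ((hF.comp measurable_fst).mul (hG.comp measurable_snd)).meas.aestronglyMeasurable]
  simp only
  rw [h.apply (F := fun x => F (a x)) (G := fun x => G (b x)) (hF.comp ha.mp.measurable)
    (hG.comp hb.mp.measurable), h.apply hF hG]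
  refine integral_congr_ae ?_
  filter_upwards [ha.condExp hF, hb.condExp hG] with x h1 h2
  rw [h1, h2]

theorem RelSq.mp_swap {R : Y → Y} {ρ : Measure (Y × Y)} (h : RelSq ν R ρ) :
    MeasurePreserving (Prod.swap : Y × Y → Y × Y) ρ ρ := by
  have := h.prob
  have hm : Measurable (Prod.swap : Y × Y → Y × Y) := measurable_swap
  refine ⟨hm, ?_⟩
  have := Measure.isProbabilityMeasure_map (μ := ρ) hm.aemeasurable
  refine measure_prod_ext fun F G hF hG => ?_
  rw [integral_map hm.aemeasurable
    ((hF.comp measurable_fst).mul (hG.comp measurable_snd)).meas.aestronglyMeasurable]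
  simp only [Prod.fst_swap, Prod.snd_swap]
  rw [h.apply hF hG]
  have e := h.apply hG hF
  simp_rw [mul_comm] at e ⊢
  rw [e]

theorem RelSq.mp_fst {R : Y → Y} {ρ : Measure (Y × Y)} (h : RelSq ν R ρ) :
    MeasurePreserving (Prod.fst : Y × Y → Y) ρ ν := by
  have := h.prob
  refine ⟨measurable_fst, ?_⟩
  have := Measure.isProbabilityMeasure_map (μ := ρ) (f := (Prod.fst : Y × Y → Y))
    measurable_fst.aemeasurable
  ext A hA
  have e := h.apply (BM.ind hA) (BM.const 1)
  rw [condExp_const (invSigma_le R)] at e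
  simp only [mul_one] at e
  rw [integral_condExp (invSigma_le R), integral_indicator_const _ hA] at e
  have e2 := integral_map (μ := ρ) measurable_fst.aemeasurable
    (f := A.indicator (fun _ => (1:ℝ))) (BM.ind hA).meas.aestronglyMeasurable
  rw [← e2, integral_indicator_const _ hA] at e
  simp only [smul_eq_mul, mul_one, measureReal_def] at e
  exact (ENNReal.toReal_eq_toReal_iff' (measure_ne_top _ _) (measure_ne_top _ _)).1 e

/-- Invariant functions of the two coordinates agree. -/
theorem RelSq.fst_eq_snd {R : Y → Y} {ρ : Measure (Y × Y)} (h : RelSq ν R ρ) {c : Y → ℝ}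
    (hc : @BM Y (invSigma R) c) : (fun p : Y × Y => c p.1) =ᵐ[ρ] fun p => c p.2 := by
  have := h.prob
  have hc0 : BM c := hc.mono (invSigma_le R)
  have hce : ν[c | invSigma R] = c := condExp_of_stronglyMeasurable (invSigma_le R)
    hc.meas'.stronglyMeasurable (hc0.integrable ν)
  have h1 := h.apply hc0 hc0
  rw [hce] at h1
  have h2 : ∫ p, c p.1 * c p.1 ∂ρ = ∫ x, c x * c x ∂ν := BM.integral_comp h.mp_fst (hc0.mul hc0)
  have h3 : ∫ p, c p.2 * c p.2 ∂ρ = ∫ x, c x * c x ∂ν := by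
    rw [← h2]
    exact BM.integral_comp h.mp_swap (F := fun p : Y × Y => c p.1 * c p.1)
      ((hc0.comp measurable_fst).mul (hc0.comp measurable_fst))
  exact ae_eq_of_sq (hc0.comp measurable_fst) (hc0.comp measurable_snd) _ h2 h3 h1

end square

section key
variable {Y : Type*} [mY : MeasurableSpace Y] {ν : Measure Y} [IsProbabilityMeasure ν]

theorem setIntegral_eq_ind {α : Type*} [MeasurableSpace α] {ρ : Measure α} {E : Set α}
    (hE : MeasurableSet E) (H : α → ℝ) :
    ∫ p in E, H p ∂ρ = ∫ p, E.indicator (fun _ => (1:ℝ)) p * H p ∂ρ := by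
  rw [← integral_indicator hE]
  refine integral_congr_ae (Eventually.of_forall fun p => ?_)
  by_cases hp : p ∈ E <;> simp [hp]

theorem ind_prod (A B : Set Y) (p : Y × Y) :
    (A ×ˢ B).indicator (fun _ => (1:ℝ)) p =
      A.indicator (fun _ => (1:ℝ)) p.1 * B.indicator (fun _ => (1:ℝ)) p.2 := by
  by_cases h1 : p.1 ∈ A <;> by_cases h2 : p.2 ∈ B <;> simp [h1, h2, Set.indicator]

theorem iterate_fst (R : Y → Y) (n : ℕ) (p : Y × Y) :
    (fun p : Y × Y => (R p.1, p.2))^[n] p = (R^[n] p.1, p.2) := by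
  induction n generalizing p with
  | zero => rfl
  | succ n ih => rw [Function.iterate_succ_apply, ih]; rfl

variable {R Q : Y → Y} {ρ : Measure (Y × Y)}

/-- The conditional expectation on `R × id`-invariant sets ignores `Q × id`. -/
theorem condExp_Q (hR : MeasurePreserving R ν ν) (hQ : Triv ν R Q) (h : RelSq ν R ρ)
    {G : Y × Y → ℝ} (hG : BM G) :
    ρ[fun p => G (Q p.1, p.2) | invSigma (fun p : Y × Y => (R p.1, p.2))] =ᵐ[ρ]
      ρ[G | invSigma (fun p : Y × Y => (R p.1, p.2))] := by
  have := h.prob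
  have hmpQ := h.mp_map hQ (Triv.id R)
  have hmpR := h.mp_map (Triv.self hR) (Triv.id R)
  simp only [_root_.id] at hmpQ hmpR
  obtain ⟨c, hc, hc'⟩ := exists_rep (ν := ρ) (m1 := invSigma (fun p : Y × Y => (R p.1, p.2))) hG
  refine EventuallyEq.trans ?_ hc'
  refine (rep_of_setIntegral (invSigma_le _) (hG.comp hmpQ.measurable) hc ?_).symm
  intro s hs
  have hs0 : MeasurableSet s := hs.1
  rw [setIntegral_congr_ae hs0 (hc'.mono fun x hx _ => hx),
    setIntegral_condExp (invSigma_le _) (hG.integrable ρ) hs,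
    setIntegral_eq_ind hs0, setIntegral_eq_ind hs0]
  simp_rw [mul_comm (s.indicator (fun _ => (1:ℝ)) _)]
  refine (dynkin_density hmpQ (BM.ind hs0) ?_ hG).symm
  intro A B hA hB
  rw [setIntegral_eq_ind (hmpQ.measurable (hA.prod hB)), setIntegral_eq_ind (hA.prod hB)]
  obtain ⟨d, hd, hd'⟩ := exists_rep (ν := ν) (m1 := invSigma R) (BM.ind hA)
  have hd0 := hd.mono (invSigma_le R)
  have hJ : BM (fun p : Y × Y => B.indicator (fun _ => (1:ℝ)) p.2 *
      s.indicator (fun _ => (1:ℝ)) p) := ((BM.ind hB).comp measurable_snd).mul (BM.ind hs0)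
  have hJinv : ∀ p : Y × Y, B.indicator (fun _ => (1:ℝ)) p.2 *
      s.indicator (fun _ => (1:ℝ)) (R p.1, p.2) = B.indicator (fun _ => (1:ℝ)) p.2 *
      s.indicator (fun _ => (1:ℝ)) p := by
    intro p
    have : (R p.1, p.2) ∈ s ↔ p ∈ s := by
      have e := hs.2
      constructor
      · intro hp
        rw [← e]; exact hp
      · intro hp
        rw [← e] at hp; exact hp
    by_cases hp : p ∈ s
    · simp [this.2 hp, hp]
    · simp [mt this.1 hp, hp]
  have e1 := integral_factor hR hmpR h.mp_fst (fun p => rfl) hJ hJinv (BM.ind hA) hd0 hd'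
  have e2 := integral_factor hR hmpR h.mp_fst (fun p => rfl) hJ hJinv
    ((BM.ind hA).comp hQ.mp.measurable) hd0 (hd'.trans (hQ.condExp (BM.ind hA)).symm)
  have e3 : ∀ p, (A ×ˢ B).indicator (fun _ => (1:ℝ)) p * s.indicator (fun _ => (1:ℝ)) p =
    A.indicator (fun _ => (1:ℝ)) p.1 * (B.indicator (fun _ => (1:ℝ)) p.2 *
      s.indicator (fun _ => (1:ℝ)) p) := by
    intro p; rw [ind_prod, mul_assoc]
  have e4 : ∀ p : Y × Y, ((fun p : Y × Y => (Q p.1, p.2)) ⁻¹' (A ×ˢ B)).indicator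
      (fun _ => (1:ℝ)) p * s.indicator (fun _ => (1:ℝ)) p =
    A.indicator (fun _ => (1:ℝ)) (Q p.1) * (B.indicator (fun _ => (1:ℝ)) p.2 *
      s.indicator (fun _ => (1:ℝ)) p) := by
    intro p
    rw [← mul_assoc]
    congr 1
    exact ind_prod A B (Q p.1, p.2)
  simp_rw [e3, e4]
  rw [e1, e2]

/-- Invariant (anti)symmetric kernels: the trace identity. -/
theorem trace_identity (hR : MeasurePreserving R ν ν) (hQ : Triv ν R Q)
    (hcomm : ∀ x, Q (R x) = R (Q x)) (h : RelSq ν R ρ) {L : Y × Y → ℝ} (hL : BM L)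
    {ε : ℝ} (hε : ε * ε = 1) (hsym : ∀ x y, L (y, x) = ε * L (x, y))
    (hinv : ∀ p : Y × Y, L (R p.1, R p.2) = L p) {φ : Y → ℝ} (hφ : BM φ) (n : ℕ) :
    ∫ p, φ p.1 * (L (p.1, Q p.2) * L (R^[n] p.1, p.2)) ∂ρ =
      ∫ p, φ p.1 * (L p * L (Q (R^[n] p.1), p.2)) ∂ρ := by
  have := h.prob
  have hmpRR := h.mp_map (Triv.self hR) (Triv.self hR)
  have hmR := hR.measurable
  have hmQ := hQ.mp.measurable
  have hmRn := hmR.iterate n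
  obtain ⟨c, hc, hc'⟩ := exists_rep (ν := ν) (m1 := invSigma R) hφ
  have hc0 := hc.mono (invSigma_le R)
  have hRn : ∀ x, R^[n] (R x) = R (R^[n] x) := fun x => by
    rw [← Function.iterate_succ_apply, Function.iterate_succ_apply']
  have hinvn : ∀ x y, L (R^[n] x, R^[n] y) = L (x, y) := by
    intro x y
    clear hmRn hRn
    induction n generalizing x y with
    | zero => rfl
    | succ n ih =>
      rw [Function.iterate_succ_apply', Function.iterate_succ_apply']
      exact (hinv (R^[n] x, R^[n] y)).trans (ih x y)
  have b1 : BM (fun p : Y × Y => L (p.1, Q p.2)) :=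
    hL.comp (g := fun p : Y × Y => (p.1, Q p.2)) (by fun_prop)
  have b2 : BM (fun p : Y × Y => L (R^[n] p.1, p.2)) :=
    hL.comp (g := fun p : Y × Y => (R^[n] p.1, p.2)) (by fun_prop)
  have b3 : BM (fun p : Y × Y => L (Q (R^[n] p.1), p.2)) :=
    hL.comp (g := fun p : Y × Y => (Q (R^[n] p.1), p.2)) (by fun_prop)
  have b4 : BM (fun p : Y × Y => L (Q p.1, p.2)) :=
    hL.comp (g := fun p : Y × Y => (Q p.1, p.2)) (by fun_prop)
  have b5 : BM (fun p : Y × Y => L (p.1, R^[n] p.2)) :=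
    hL.comp (g := fun p : Y × Y => (p.1, R^[n] p.2)) (by fun_prop)
  rw [integral_factor hR hmpRR h.mp_fst (fun p => rfl) (b1.mul b2)
      (by
        intro p
        simp only
        rw [hcomm, hRn, hinv (p.1, Q p.2), hinv (R^[n] p.1, p.2)]) hφ hc0 hc',
    integral_factor hR hmpRR h.mp_fst (fun p => rfl) (hL.mul b3)
      (by
        intro p
        simp only
        rw [hRn, hcomm, hinv p, hinv (Q (R^[n] p.1), p.2)]) hφ hc0 hc']
  -- swap the coordinates
  rw [← BM.integral_comp h.mp_swap ((hc0.comp measurable_fst).mul (b1.mul b2))]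
  have e1 : ∀ p : Y × Y, c p.swap.1 * (L (p.swap.1, Q p.swap.2) * L (R^[n] p.swap.1, p.swap.2)) =
      c p.2 * (L (Q p.1, p.2) * L (p.1, R^[n] p.2)) := by
    intro p
    simp only [Prod.fst_swap, Prod.snd_swap]
    rw [hsym (Q p.1) p.2, hsym p.1 (R^[n] p.2)]
    linear_combination (c p.2 * (L (Q p.1, p.2) * L (p.1, R^[n] p.2))) * hε
  simp_rw [e1]
  have hmpn : MeasurePreserving (fun p : Y × Y => (R^[n] p.1, p.2)) ρ ρ := by
    have hmpR := h.mp_map (Triv.self hR) (Triv.id R)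
    have := hmpR.iterate n
    convert this using 1
    funext p
    exact (iterate_fst R n p).symm
  rw [← BM.integral_comp hmpn ((hc0.comp measurable_snd).mul (b4.mul b5))]
  refine integral_congr_ae ?_
  filter_upwards [h.fst_eq_snd hc] with p hp
  rw [hinvn, hp, mul_comm (L (Q (R^[n] p.1), p.2))]

/-- Kernels which are invariant under `R × R` are invariant under `Q × Q`. -/
theorem kernel_invariant (hR : MeasurePreserving R ν ν) (hQ : Triv ν R Q)
    (hcomm : ∀ x, Q (R x) = R (Q x)) (h : RelSq ν R ρ) {L : Y × Y → ℝ} (hL : BM L)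
    {ε : ℝ} (hε : ε * ε = 1) (hsym : ∀ x y, L (y, x) = ε * L (x, y))
    (hinv : ∀ p : Y × Y, L (R p.1, R p.2) = L p) :
    (fun p : Y × Y => L (Q p.1, Q p.2)) =ᵐ[ρ] L := by
  have := h.prob
  have hmR := hR.measurable
  have hmQ := hQ.mp.measurable
  have hmpR := h.mp_map (Triv.self hR) (Triv.id R)
  have hmpQ2 := h.mp_map (Triv.id R) hQ
  have hmpRR := h.mp_map (Triv.self hR) (Triv.self hR)
  have hmpQQ := h.mp_map hQ hQ
  simp only [_root_.id] at hmpR hmpQ2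
  have hQn : ∀ n x, Q (R^[n] x) = R^[n] (Q x) := by
    intro n
    induction n with
    | zero => intro x; rfl
    | succ n ih => intro x; rw [Function.iterate_succ_apply, ih, hcomm, Function.iterate_succ_apply]
  -- main step
  have main : ∀ θ : Y → ℝ, BM θ → ∀ b : Y → ℝ, BM b →
      ∫ p, b p.2 * (θ p.1 * L (p.1, Q p.2)) ∂ρ = ∫ p, b p.2 * (θ (Q p.1) * L p) ∂ρ := by
    intro θ hθ b hb
    let G : Y × Y → ℝ := fun p => θ p.1 * L p
    let G1 : Y × Y → ℝ := fun p => θ p.1 * L (p.1, Q p.2)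
    let G2 : Y × Y → ℝ := fun p => θ (Q p.1) * L p
    let G3 : Y × Y → ℝ := fun p => θ (Q p.1) * L (Q p.1, p.2)
    have bL1 : BM (fun p : Y × Y => L (p.1, Q p.2)) :=
      hL.comp (g := fun p : Y × Y => (p.1, Q p.2)) (by fun_prop)
    have bL2 : BM (fun p : Y × Y => L (Q p.1, p.2)) :=
      hL.comp (g := fun p : Y × Y => (Q p.1, p.2)) (by fun_prop)
    have hG : BM G := (hθ.comp measurable_fst).mul hL
    have hG1 : BM G1 := (hθ.comp measurable_fst).mul bL1
    have hG2 : BM G2 := (hθ.comp (hmQ.comp measurable_fst)).mul hL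
    have hG3 : BM G3 := (hθ.comp (hmQ.comp measurable_fst)).mul bL2
    obtain ⟨c, hc, hc'⟩ := exists_rep (ν := ρ)
      (m1 := invSigma (fun p : Y × Y => (R p.1, p.2))) hG
    obtain ⟨c1, hc1, hc1'⟩ := exists_rep (ν := ρ)
      (m1 := invSigma (fun p : Y × Y => (R p.1, p.2))) hG1
    obtain ⟨c2, hc2, hc2'⟩ := exists_rep (ν := ρ)
      (m1 := invSigma (fun p : Y × Y => (R p.1, p.2))) hG2
    have hc3' : c =ᵐ[ρ] ρ[G3 | invSigma (fun p : Y × Y => (R p.1, p.2))] :=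
      hc'.trans (condExp_Q hR hQ h hG).symm
    have hc0 := hc.mono (invSigma_le _)
    have hc10 := hc1.mono (invSigma_le _)
    have hc20 := hc2.mono (invSigma_le _)
    -- pulling out
    have pull : ∀ {u F d : Y × Y → ℝ}, @BM _ (invSigma (fun p : Y × Y => (R p.1, p.2))) u → BM F →
        d =ᵐ[ρ] ρ[F | invSigma (fun p : Y × Y => (R p.1, p.2))] →
        ∫ p, u p * d p ∂ρ = ∫ p, u p * F p ∂ρ := by
      intro u F d hu hF hd
      rw [← integral_mul_condExp_left (invSigma_le _) hF hu]
      refine integral_congr_ae ?_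
      filter_upwards [hd] with p hp
      rw [hp]
    have pull' : ∀ {u F d : Y × Y → ℝ}, @BM _ (invSigma (fun p : Y × Y => (R p.1, p.2))) u → BM F →
        d =ᵐ[ρ] ρ[F | invSigma (fun p : Y × Y => (R p.1, p.2))] →
        ∫ p, d p * u p ∂ρ = ∫ p, F p * u p ∂ρ := by
      intro u F d hu hF hd
      simp_rw [mul_comm _ (u _)]
      exact pull hu hF hd
    have w00 := weak_ergodic hmpR hG hG hc0 hc'
    have w11 := weak_ergodic hmpR hG1 hG1 hc10 hc1'
    have w22 := weak_ergodic hmpR hG2 hG2 hc20 hc2'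
    have w12 := weak_ergodic hmpR hG1 hG2 hc20 hc2'
    have w03 := weak_ergodic hmpR hG hG3 hc0 hc3'
    simp_rw [iterate_fst] at w00 w11 w22 w12 w03
    have bLn : ∀ n, BM (fun p : Y × Y => L (R^[n] p.1, p.2)) := fun n =>
      have := hmR.iterate n
      hL.comp (g := fun p : Y × Y => (R^[n] p.1, p.2)) (by fun_prop)
    have n11 : ∀ n, ∫ p, G1 p * G1 (R^[n] p.1, p.2) ∂ρ = ∫ p, G p * G (R^[n] p.1, p.2) ∂ρ := by
      intro n
      have hg : BM (fun p : Y × Y => G p * G (R^[n] p.1, p.2)) :=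
        hG.mul (((hθ.comp (hmR.iterate n)).comp measurable_fst).mul (bLn n))
      exact BM.integral_comp hmpQ2 hg
    have n22 : ∀ n, ∫ p, G2 p * G2 (R^[n] p.1, p.2) ∂ρ = ∫ p, G p * G (R^[n] p.1, p.2) ∂ρ := by
      intro n
      have hφ : BM (fun x => θ x * θ (R^[n] x)) := hθ.mul (hθ.comp (hmR.iterate n))
      obtain ⟨d, hd, hd'⟩ := exists_rep (ν := ν) (m1 := invSigma R) hφ
      have hd0 := hd.mono (invSigma_le R)
      have hJ := hL.mul (bLn n)
      have hJinv : ∀ p : Y × Y, L (R p.1, R p.2) * L (R^[n] (R p.1), R p.2) =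
          L p * L (R^[n] p.1, p.2) := by
        intro p
        rw [← Function.iterate_succ_apply, Function.iterate_succ_apply', hinv p,
          hinv (R^[n] p.1, p.2)]
      have e1 := integral_factor hR hmpRR h.mp_fst (fun p => rfl) hJ hJinv hφ hd0 hd'
      have e2 := integral_factor hR hmpRR h.mp_fst (fun p => rfl) hJ hJinv
        (hφ.comp hmQ) hd0 (hd'.trans (hQ.condExp hφ).symm)
      have e := e2.trans e1.symm
      convert e using 2
      · funext p
        simp only [G2, hQn]; ring
      · funext p
        simp only [G]; ring
    have n12 : ∀ n, ∫ p, G1 p * G2 (R^[n] p.1, p.2) ∂ρ = ∫ p, G p * G3 (R^[n] p.1, p.2) ∂ρ := by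
      intro n
      have hφ : BM (fun x => θ x * θ (Q (R^[n] x))) :=
        hθ.mul (hθ.comp (hmQ.comp (hmR.iterate n)))
      have e := trace_identity hR hQ hcomm h hL hε hsym hinv hφ n
      convert e using 2
      · funext p
        simp only [G1, G2]; ring
      · funext p
        simp only [G, G3]; ring
    simp_rw [n11] at w11
    simp_rw [n22] at w22
    simp_rw [n12] at w12
    have q11 := tendsto_nhds_unique w11 w00
    have q22 := tendsto_nhds_unique w22 w00
    have q12 := tendsto_nhds_unique w12 w03
    have hEq : c1 =ᵐ[ρ] c2 := by
      refine ae_eq_of_sq hc10 hc20 (∫ p, G p * c p ∂ρ) ?_ ?_ ?_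
      · rw [pull' hc1 hG1 hc1', q11]
      · rw [pull' hc2 hG2 hc2', q22]
      · rw [pull' hc2 hG1 hc1', q12]
    have hbJ : @BM _ (invSigma (fun p : Y × Y => (R p.1, p.2))) (fun p : Y × Y => b p.2) := by
      refine @BM.mk _ (invSigma (fun p : Y × Y => (R p.1, p.2))) _ ?_ ?_
      · intro s hs
        exact ⟨(hb.comp measurable_snd).meas hs, rfl⟩
      · exact (hb.comp measurable_snd (β := Y × Y)).bdd
    rw [← pull hbJ hG1 hc1', ← pull hbJ hG2 hc2']
    refine integral_congr_ae ?_
    filter_upwards [hEq] with p hp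
    rw [hp]
  have hdens : ∀ {G : Y × Y → ℝ}, BM G →
      ∫ p, G (Q p.1, Q p.2) * L p ∂ρ = ∫ p, G p * L p ∂ρ := by
    intro G hG
    refine dynkin_density hmpQQ hL ?_ hG
    intro A B hA hB
    rw [setIntegral_eq_ind (hmpQQ.measurable (hA.prod hB)), setIntegral_eq_ind (hA.prod hB)]
    have e := main _ (BM.ind hA) _ ((BM.ind hB).comp hmQ)
    have hb := ((BM.ind hB).comp (measurable_snd (α := Y))).mul
      (((BM.ind hA).comp (measurable_fst (β := Y))).mul hL)
    have e' := BM.integral_comp hmpQ2 hb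
    have e'' := e'.symm.trans e
    have f1 : ∀ p, (A ×ˢ B).indicator (fun _ => (1:ℝ)) p * L p =
        B.indicator (fun _ => (1:ℝ)) p.2 * (A.indicator (fun _ => (1:ℝ)) p.1 * L p) := by
      intro p; rw [ind_prod]; ring
    have f2 : ∀ p, ((fun p : Y × Y => (Q p.1, Q p.2)) ⁻¹' (A ×ˢ B)).indicator
        (fun _ => (1:ℝ)) p * L p =
        B.indicator (fun _ => (1:ℝ)) (Q p.2) * (A.indicator (fun _ => (1:ℝ)) (Q p.1) * L p) := by
      intro p
      have := ind_prod A B (Q p.1, Q p.2)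
      simp only at this
      rw [← mul_assoc, mul_comm (B.indicator (fun _ => (1:ℝ)) (Q p.2)), ← this]
      rfl
    simp_rw [f1, f2]
    exact e''.symm
  refine ae_eq_of_sq (hL.comp hmpQQ.measurable) hL (∫ p, L p * L p ∂ρ) ?_ rfl (hdens hL)
  exact BM.integral_comp hmpQQ (hL.mul hL)

/-- Sets which are invariant under `R × R` are a.e. invariant under `Q × Q`. -/
theorem RelSq.triv (hR : MeasurePreserving R ν ν) (hQ : Triv ν R Q)
    (hcomm : ∀ x, Q (R x) = R (Q x)) (h : RelSq ν R ρ) :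
    Triv ρ (fun p : Y × Y => (R p.1, R p.2)) (fun p : Y × Y => (Q p.1, Q p.2)) := by
  refine ⟨h.mp_map hQ hQ, fun B hB hBinv => ?_⟩
  have hi := BM.ind hB
  have hmem : ∀ p : Y × Y, (R p.1, R p.2) ∈ B ↔ p ∈ B := by
    intro p
    constructor
    · intro hp
      rw [← hBinv]; exact hp
    · intro hp
      rw [← hBinv] at hp; exact hp
  have hiinv : ∀ p : Y × Y, B.indicator (fun _ => (1:ℝ)) (R p.1, R p.2) =
      B.indicator (fun _ => (1:ℝ)) p := by
    intro p
    by_cases hp : p ∈ B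
    · simp [(hmem p).2 hp, hp]
    · simp [mt (hmem p).1 hp, hp]
  have his := hi.comp (measurable_swap (α := Y) (β := Y))
  have h1 := kernel_invariant hR hQ hcomm h (hi.add his) (ε := 1) (by norm_num)
    (fun x y => by simp only [Prod.swap_prod_mk]; ring)
    (fun p => by
      simp only [Prod.swap_prod_mk]
      rw [hiinv p, hiinv (p.2, p.1)]; rfl)
  have h2 := kernel_invariant hR hQ hcomm h (hi.sub his) (ε := -1) (by norm_num)
    (fun x y => by simp only [Prod.swap_prod_mk]; ring)
    (fun p => by
      simp only [Prod.swap_prod_mk]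
      rw [hiinv p, hiinv (p.2, p.1)]; rfl)
  filter_upwards [h1, h2] with p e1 e2
  have e : B.indicator (fun _ => (1:ℝ)) (Q p.1, Q p.2) = B.indicator (fun _ => (1:ℝ)) p := by
    linarith
  have : (Q p.1, Q p.2) ∈ B ↔ p ∈ B := by
    by_cases a : (Q p.1, Q p.2) ∈ B <;> by_cases b : p ∈ B <;> simp [a, b] at e ⊢
  exact propext this

end key

section induct
variable {Y : Type*} [mY : MeasurableSpace Y] {ν : Measure Y} [IsProbabilityMeasure ν]

/-- Sets in one invariant `σ`-algebra agree a.e. with sets in the other. -/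
theorem Triv.version {R Q : Y → Y} (h : Triv ν R Q) {B : Set Y}
    (hB : MeasurableSet[invSigma R] B) : ∃ B', MeasurableSet[invSigma Q] B' ∧ B' =ᵐ[ν] B := by
  obtain ⟨t, ht, ht1, ht2⟩ := h.mp.quasiMeasurePreserving.exists_preimage_eq_of_preimage_ae
    (hB.1.nullMeasurableSet) (h.triv B hB.1 hB.2)
  exact ⟨t, ⟨ht, ht2⟩, ht1⟩

theorem Triv.rep_eq {R Q : Y → Y} (h : Triv ν R Q) {F u v : Y → ℝ} (hF : BM F)
    (hu : @BM Y (invSigma R) u) (hv : @BM Y (invSigma Q) v)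
    (hu' : u =ᵐ[ν] ν[F | invSigma R]) (hv' : v =ᵐ[ν] ν[F | invSigma Q]) :
    u =ᵐ[ν] ν[v | invSigma R] := by
  refine rep_of_setIntegral (invSigma_le R) (hv.mono (invSigma_le Q)) hu fun s hs => ?_
  obtain ⟨s', hs', e⟩ := h.version hs
  rw [setIntegral_congr_ae hs.1 (hu'.mono fun x hx _ => hx),
    setIntegral_condExp (invSigma_le R) (hF.integrable ν) hs,
    ← setIntegral_congr_set e, ← setIntegral_congr_set e,
    setIntegral_congr_ae hs'.1 (hv'.mono fun x hx _ => hx),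
    setIntegral_condExp (invSigma_le Q) (hF.integrable ν) hs']

theorem Triv.condExp_eq {R Q : Y → Y} (h : Triv ν R Q) (h' : Triv ν Q R) {F : Y → ℝ} (hF : BM F) :
    ν[F | invSigma R] =ᵐ[ν] ν[F | invSigma Q] := by
  obtain ⟨u, hu, hu'⟩ := exists_rep (ν := ν) (m1 := invSigma R) hF
  obtain ⟨v, hv, hv'⟩ := exists_rep (ν := ν) (m1 := invSigma Q) hF
  exact condExp_eq_of_mutual (invSigma_le R) (invSigma_le Q) hu hv hu' hv'
    (h.rep_eq hF hu hv hu' hv') (h'.rep_eq hF hv hu hv' hu')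

theorem RelSq.unique {R Q : Y → Y} (h : Triv ν R Q) (h' : Triv ν Q R) {ρ σ : Measure (Y × Y)}
    (hρ : RelSq ν R ρ) (hσ : RelSq ν Q σ) : ρ = σ := by
  have := hρ.prob
  have := hσ.prob
  refine measure_prod_ext fun F G hF hG => ?_
  rw [hρ.apply hF hG, hσ.apply hF hG]
  refine integral_congr_ae ?_
  filter_upwards [h.condExp_eq h' hF, h.condExp_eq h' hG] with x e1 e2
  rw [e1, e2]

end induct

theorem HKBox.map_comm {X : Type*} {T S : X → X} (h : ∀ x, S (T x) = T (S x)) :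
    ∀ (k : ℕ) (x : HKBox X k), HKBox.map S k (HKBox.map T k x) = HKBox.map T k (HKBox.map S k x)
  | 0, x => h x
  | (k+1), p => Prod.ext (HKBox.map_comm h k p.1) (HKBox.map_comm h k p.2)

theorem HK_triv {X : Type*} [m : MeasurableSpace X] (μ : Measure X) [IsProbabilityMeasure μ]
    {T S : X → X} (h : ∀ x, S (T x) = T (S x)) (hT : Ergodic T μ) (hS : MeasurePreserving S μ μ)
    {ν : ∀ k, Measure (HKBox X k)} (hν : IsHKSeq μ T ν) (k : ℕ) :
    IsProbabilityMeasure (ν k) ∧ MeasurePreserving (HKBox.map T k) (ν k) (ν k) ∧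
      Triv (ν k) (HKBox.map T k) (HKBox.map S k) := by
  induction k with
  | zero =>
    rw [hν.1]
    refine ⟨‹_›, hT.toMeasurePreserving, hS, fun B hB e => ?_⟩
    rcases hT.toPreErgodic.ae_empty_or_univ hB e with h0 | h0
    · exact (hS.quasiMeasurePreserving.preimage_ae_eq h0).trans h0.symm
    · exact (hS.quasiMeasurePreserving.preimage_ae_eq h0).trans h0.symm
  | succ k ih =>
    obtain ⟨i1, i2, i3⟩ := ih
    have hr : RelSq (ν k) (HKBox.map T k) (ν (k+1)) := hν.2 k
    exact ⟨hr.prob, hr.mp_map (Triv.self i2) (Triv.self i2), hr.triv i2 i3 (HKBox.map_comm h k)⟩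

theorem HK_eq {X : Type*} [m : MeasurableSpace X] (μ : Measure X) [IsProbabilityMeasure μ]
    {T S : X → X} (h : ∀ x, S (T x) = T (S x)) (hT : Ergodic T μ) (hS : Ergodic S μ)
    {νT νS : ∀ k, Measure (HKBox X k)} (hνT : IsHKSeq μ T νT) (hνS : IsHKSeq μ S νS) (k : ℕ) :
    νT k = νS k := by
  induction k with
  | zero => rw [hνT.1, hνS.1]
  | succ k ih =>
    obtain ⟨i1, -, i3⟩ := HK_triv μ h hT hS.toMeasurePreserving hνT k
    obtain ⟨-, -, j3⟩ := HK_triv μ (fun x => (h x).symm) hS hT.toMeasurePreserving hνS k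
    have hr : RelSq (νT k) (HKBox.map T k) (νT (k+1)) := hνT.2 k
    have hs : RelSq (νS k) (HKBox.map S k) (νS (k+1)) := hνS.2 k
    rw [← ih] at j3 hs
    exact RelSq.unique i3 j3 hr hs

section final
variable {α : Type*} {m1 m2 : MeasurableSpace α} [m0 : MeasurableSpace α] {ν : Measure α} [IsProbabilityMeasure ν]

theorem rep_of_zero (h1 : m1 ≤ m0)
    (hz : ∀ f : α → ℝ, BM f → (ν[f | m1]) =ᵐ[ν] 0 → (ν[f | m2]) =ᵐ[ν] 0)
    {f u v : α → ℝ} (hf : BM f) (hu : @BM α m1 u)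
    (hu' : u =ᵐ[ν] ν[f | m1]) (hv' : v =ᵐ[ν] ν[f | m2]) : v =ᵐ[ν] ν[u | m2] := by
  have hu0 : BM u := hu.mono h1
  have hce : ν[u | m1] = u := condExp_of_stronglyMeasurable h1
    hu.meas'.stronglyMeasurable (hu0.integrable ν)
  have a := condExp_sub (hf.integrable ν) (hu0.integrable ν) m1
  have b := condExp_sub (hf.integrable ν) (hu0.integrable ν) m2
  have z := hz (f - u) (hf.sub hu0) (by
    filter_upwards [a, hu'] with x e1 e2
    rw [e1, Pi.sub_apply, hce, ← e2]; simp)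
  filter_upwards [b, z, hv'] with x e1 e2 e3
  rw [e1] at e2
  simp only [Pi.sub_apply, Pi.zero_apply] at e2
  linarith

theorem condExp_eq_of_zero (h1 : m1 ≤ m0) (h2 : m2 ≤ m0)
    (hz : ∀ f : α → ℝ, BM f → ((ν[f | m1]) =ᵐ[ν] 0 ↔ (ν[f | m2]) =ᵐ[ν] 0))
    {f : α → ℝ} (hf : BM f) : ν[f | m1] =ᵐ[ν] ν[f | m2] := by
  obtain ⟨u, hu, hu'⟩ := exists_rep (ν := ν) (m1 := m1) hf
  obtain ⟨v, hv, hv'⟩ := exists_rep (ν := ν) (m1 := m2) hf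
  exact condExp_eq_of_mutual h1 h2 hu hv hu' hv'
    (rep_of_zero h2 (fun f hf => (hz f hf).2) hf hv hv' hu')
    (rep_of_zero h1 (fun f hf => (hz f hf).1) hf hu hu' hv')

end final

/-- For commuting invertible ergodic measure preserving transformations `T` and `S` of a
probability space, the Host–Kra factor σ-algebras coincide: if `𝒵T` and `𝒵S` are
sub-σ-algebras satisfying the characterizing property of `𝒵_k(X,T)` and `𝒵_k(X,S)`
(for `f ∈ L^∞`, `𝔼(f|𝒵) = 0` iff `⦀f⦀_{k+1} = 0`), then they define the same factor:
conditional expectations with respect to them agree. -/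
theorem HK_factors_eq_of_commuting {X : Type*} [m : MeasurableSpace X]
    (μ : Measure X) [IsProbabilityMeasure μ]
    (T S T' S' : X → X) (hT' : Measurable T') (hS' : Measurable S')
    (hTinv : Function.LeftInverse T' T ∧ Function.RightInverse T' T)
    (hSinv : Function.LeftInverse S' S ∧ Function.RightInverse S' S)
    (hcomm : T ∘ S = S ∘ T)
    (hergT : Ergodic T μ) (hergS : Ergodic S μ)
    (νT νS : ∀ k, Measure (HKBox X k))
    (hνT : IsHKSeq μ T νT) (hνS : IsHKSeq μ S νS)
    (k : ℕ) (hk : 1 ≤ k)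
    (𝒵T 𝒵S : MeasurableSpace X) (h𝒵T : 𝒵T ≤ m) (h𝒵S : 𝒵S ≤ m)
    (hcharT : ∀ f : X → ℝ, Measurable[m] f → (∃ C, ∀ x, |f x| ≤ C) →
      ((μ[f | 𝒵T]) =ᵐ[μ] 0 ↔ (@HKseminorm X m νT (k + 1) f) = 0))
    (hcharS : ∀ f : X → ℝ, Measurable[m] f → (∃ C, ∀ x, |f x| ≤ C) →
      ((μ[f | 𝒵S]) =ᵐ[μ] 0 ↔ (@HKseminorm X m νS (k + 1) f) = 0)) :
    ∀ f : X → ℝ, Measurable[m] f → (∃ C, ∀ x, |f x| ≤ C) →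
      (μ[f | 𝒵T]) =ᵐ[μ] (μ[f | 𝒵S]) := by
  intro f hf hb
  have hν : νT = νS := funext (@HK_eq X m μ _ T S (fun x => (congrFun hcomm x).symm)
    hergT hergS νT νS hνT hνS)
  refine @condExp_eq_of_zero X 𝒵T 𝒵S m μ _ h𝒵T h𝒵S (fun g hg => ?_) f (@BM.mk X m f hf hb)
  rw [hcharT g hg.meas' hg.bdd', hcharS g hg.meas' hg.bdd', hν]
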